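/- Let f : ℝ → ℝ be a polynomial of degree at most d, not identically zero on [0,1], and let S = sup_{t ∈ [0,1]} |f(t)| > 0. Then for every ε > 0, the Lebesgue measure of {t ∈ [0,1] : |f(t)| < ε} is at most 4·(ε/S)^{1/d}. (One-dimensional sub-level / (C,α)-good estimate.) -/

import Mathlib

open MeasureTheory Polynomial

/-!
The estimate follows from Remez' inequality: if `|f| ≤ ε` on a set `E ⊆ [a, b]` of measure `m > 0`
and `f` has degree at most `d`, then `|f| ≤ ε * T_d (2 * (b - a) / m - 1)` on `[a, b]`, where `T_d`
is the Chebyshev polynomial.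

Suppose first that the point of evaluation is the endpoint `b`. The distribution function
`y ↦ |E ∩ (-∞, y]|` is 1-Lipschitz, so it can be inverted at `m * (1 + η i) / 2`, where the `η i`
are the Chebyshev extremal nodes, to give points `v i ∈ E` which are at least as spread out as the
nodes rescaled to length `m`, and at least as far from `a`. In the Lagrange interpolation formula
for `f b` at the points `v i` every term is therefore at most `ε` times the absolute value of the
corresponding term for `T_d` at the nodes, and beyond `1` the latter terms are all positive because
`T_d` alternates at the nodes.

An interior point splits `[a, b]` into two intervals, in one of which `E` has at least its original
density; that interval has the point as an endpoint. Finally `T_d x ≤ (2 * x) ^ d` for `x ≥ 1`.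
-/

section Chebyshev

open Polynomial.Chebyshev

theorem eval_eq_sum_eval_mul_prod_div {F ι : Type*} [Field F] [DecidableEq ι] {s : Finset ι}
    {v : ι → F} (hv : Set.InjOn v s) {f : F[X]} (hf : f.degree < s.card) (x : F) :
    f.eval x = ∑ i ∈ s, f.eval (v i) * ∏ j ∈ s.erase i, (x - v j) / (v i - v j) := by
  conv_lhs => rw [Lagrange.eq_interpolate hv hf, Lagrange.interpolate_apply, eval_finsetSum]
  simp only [Lagrange.basis, Lagrange.basisDivisor, eval_mul, eval_C, eval_prod, eval_sub, eval_X,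
    div_eq_inv_mul]

theorem eval_T_le_two_mul_pow (n : ℕ) {x : ℝ} (hx : 1 ≤ x) : (T ℝ n).eval x ≤ (2 * x) ^ n := by
  induction n with
  | zero => simp
  | succ n ih =>
    rcases n with _ | n
    · simp
      linarith
    have hT : (T ℝ (n + 2 : ℕ)).eval x = 2 * x * (T ℝ (n + 1 : ℕ)).eval x - (T ℝ n).eval x := by
      simp [T_add_two]
    have hpos : 1 ≤ (T ℝ n).eval x := one_le_eval_T_real n hx
    calc (T ℝ (n + 2 : ℕ)).eval x ≤ 2 * x * (T ℝ (n + 1 : ℕ)).eval x := by linarith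
      _ ≤ 2 * x * (2 * x) ^ (n + 1) := by gcongr
      _ = (2 * x) ^ (n + 2) := by ring

theorem prod_abs_node_sub_node {d i : ℕ} (hi : i ≤ d) :
    ∏ j ∈ (Finset.range (d + 1)).erase i, |node d i - node d j| =
      (-1) ^ i * ∏ j ∈ (Finset.range (d + 1)).erase i, (node d i - node d j) := by
  rw [← abs_of_pos (zero_lt_prod_node_sub_node hi), abs_mul, abs_neg_one_pow, one_mul,
    Finset.abs_prod]

theorem eval_T_eq_sum_prod_div_abs (d : ℕ) (z : ℝ) :
    (T ℝ d).eval z = ∑ i ∈ Finset.range (d + 1),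
      ∏ j ∈ (Finset.range (d + 1)).erase i, (z - node d j) / |node d i - node d j| := by
  have hdeg : (T ℝ d).degree < (Finset.range (d + 1)).card := by
    simpa using Nat.cast_lt.mpr d.lt_succ_self
  rw [eval_eq_sum_eval_mul_prod_div (strictAntiOn_node d).injOn hdeg]
  refine Finset.sum_congr rfl fun i hi => ?_
  have hi : i ≤ d := Finset.mem_range_succ_iff.mp hi
  rw [eval_T_real_node (Finset.mem_Iic.mpr hi), Finset.prod_div_distrib, Finset.prod_div_distrib,
    prod_abs_node_sub_node hi]
  rcases neg_one_pow_eq_or ℝ i with h | h <;> simp [h, div_neg]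

theorem abs_eval_le_mul_eval_T_of_node_separated {d : ℕ} {f : ℝ[X]} (hf : f.natDegree ≤ d)
    {ε r x z : ℝ} (hr : 0 < r) {v : ℕ → ℝ} (hfv : ∀ i ≤ d, |f.eval (v i)| ≤ ε)
    (hsep : ∀ i ≤ d, ∀ j ≤ d, r * |node d i - node d j| ≤ |v i - v j|)
    (hx : ∀ i ≤ d, |x - v i| ≤ r * (z - node d i)) :
    |f.eval x| ≤ ε * (T ℝ d).eval z := by
  have hdist : ∀ i ∈ Finset.range (d + 1), ∀ j ∈ Finset.range (d + 1), i ≠ j →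
      0 < |node d i - node d j| := fun i hi j hj hij =>
    abs_pos.mpr <| sub_ne_zero.mpr fun h => hij ((strictAntiOn_node d).injOn hi hj h)
  have hinj : Set.InjOn v (Finset.range (d + 1)) := by
    intro i hi j hj hij
    by_contra hne
    have := hsep i (Finset.mem_range_succ_iff.mp hi) j (Finset.mem_range_succ_iff.mp hj)
    rw [hij, sub_self, abs_zero] at this
    exact this.not_gt (mul_pos hr (hdist i hi j hj hne))
  have hdeg : f.degree < (Finset.range (d + 1)).card := by
    rw [Finset.card_range]
    exact (degree_le_of_natDegree_le hf).trans_lt (by exact_mod_cast d.lt_succ_self)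
  rw [eval_eq_sum_eval_mul_prod_div hinj hdeg, eval_T_eq_sum_prod_div_abs, Finset.mul_sum]
  refine (Finset.abs_sum_le_sum_abs _ _).trans (Finset.sum_le_sum fun i hi => ?_)
  have hid : i ≤ d := Finset.mem_range_succ_iff.mp hi
  rw [abs_mul, Finset.abs_prod]
  gcongr with j hj
  · exact (abs_nonneg _).trans (hfv i hid)
  · exact hfv i hid
  have hj' := Finset.mem_of_mem_erase hj
  have hjd : j ≤ d := Finset.mem_range_succ_iff.mp hj'
  have hij := mul_pos hr (hdist i hi j hj' (Finset.ne_of_mem_erase hj).symm)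
  calc |(x - v j) / (v i - v j)|
      ≤ r * (z - node d j) / (r * |node d i - node d j|) := by
        rw [abs_div]
        exact div_le_div₀ ((abs_nonneg _).trans (hx j hjd)) (hx j hjd) hij (hsep i hid j hjd)
    _ = (z - node d j) / |node d i - node d j| := mul_div_mul_left _ _ hr.ne'

end Chebyshev

section DistributionFunction

theorem measureReal_inter_Iic_of_mem_lowerBounds {α : Type*} [MeasurableSpace α] [PartialOrder α]
    {μ : Measure α} [NullSingletonClass μ] {s : Set α} {a : α} (ha : a ∈ lowerBounds s) :
    μ.real (s ∩ Set.Iic a) = 0 := by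
  have hsub : s ∩ Set.Iic a ⊆ {a} := fun t ht => le_antisymm ht.2 (ha ht.1)
  rw [measureReal_def, measure_mono_null hsub (measure_singleton a), ENNReal.toReal_zero]

theorem measureReal_inter_Iic_add_inter_Ici {α : Type*} [MeasurableSpace α] [LinearOrder α]
    [TopologicalSpace α] [ClosedIicTopology α] [OpensMeasurableSpace α] {μ : Measure α}
    [NullSingletonClass μ] {s : Set α} (a : α) (hs : μ s ≠ ⊤) :
    μ.real (s ∩ Set.Iic a) + μ.real (s ∩ Set.Ici a) = μ.real s := by
  rw [← measureReal_inter_add_sdiff measurableSet_Iic hs, Set.sdiff_eq, Set.compl_Iic]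
  exact congrArg _ (measureReal_congr (ae_eq_set_inter (ae_eq_refl s) Ioi_ae_eq_Ici.symm))

variable {E : Set ℝ}

theorem lipschitzWith_volume_real_inter_Iic (hE : volume E ≠ ⊤) :
    LipschitzWith 1 fun y => volume.real (E ∩ Set.Iic y) := by
  refine LipschitzWith.of_le_add fun x y => ?_
  have hfin : volume (E ∩ Set.Iic y) ≠ ⊤ := measure_ne_top_of_subset Set.inter_subset_left hE
  have hsub : E ∩ Set.Iic x ⊆ E ∩ Set.Iic y ∪ Set.Ioc y x := fun t ht =>
    (le_or_gt t y).imp (⟨ht.1, ·⟩) (⟨·, ht.2⟩)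
  calc volume.real (E ∩ Set.Iic x)
      ≤ volume.real (E ∩ Set.Iic y) + volume.real (Set.Ioc y x) :=
        (measureReal_mono hsub (measure_union_ne_top hfin (by simp))).trans
          (measureReal_union_le _ _)
    _ ≤ volume.real (E ∩ Set.Iic y) + dist x y := by
        rw [Real.volume_real_Ioc, Real.dist_eq]
        gcongr
        exact max_le (le_abs_self _) (abs_nonneg _)

theorem exists_mem_volume_real_inter_Iic_eq (hE : IsCompact E) (hne : E.Nonempty) {t : ℝ}
    (ht : t ∈ Set.Icc 0 (volume.real E)) : ∃ y ∈ E, volume.real (E ∩ Set.Iic y) = t := by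
  have hcont := (lipschitzWith_volume_real_inter_Iic hE.measure_ne_top).continuous
  have hInf : volume.real (E ∩ Set.Iic (sInf E)) = 0 :=
    measureReal_inter_Iic_of_mem_lowerBounds fun _ => csInf_le hE.bddBelow
  have hSup : E ∩ Set.Iic (sSup E) = E :=
    Set.inter_eq_left.mpr fun _ => le_csSup hE.bddAbove
  obtain ⟨y, hy, rfl⟩ := intermediate_value_Icc (csInf_le hE.bddBelow (hE.sSup_mem hne))
    hcont.continuousOn (by simpa only [hInf, hSup] using ht)
  have hK : IsCompact (E ∩ Set.Iic y) := hE.inter_right isClosed_Iic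
  have hmem := hK.sSup_mem ⟨sInf E, hE.sInf_mem hne, hy.1⟩
  refine ⟨_, hmem.1, congrArg volume.real (Set.Subset.antisymm ?_ ?_)⟩
  · exact Set.inter_subset_inter_right _ (Set.Iic_subset_Iic.mpr hmem.2)
  · exact fun t ht => ⟨ht.1, le_csSup hK.bddAbove ht⟩

end DistributionFunction

section Remez

open Polynomial.Chebyshev

variable {d : ℕ} {f : ℝ[X]} {E : Set ℝ} {a b x z ε : ℝ}

theorem abs_eval_right_le_mul_eval_T (hf : f.natDegree ≤ d) (hE : IsCompact E)
    (hEab : E ⊆ Set.Icc a b) (hfE : ∀ t ∈ E, |f.eval t| ≤ ε) (hpos : 0 < volume.real E)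
    (hz : 2 * (b - a) ≤ (z + 1) * volume.real E) :
    |f.eval b| ≤ ε * (T ℝ d).eval z := by
  have hne : E.Nonempty := nonempty_of_measureReal_ne_zero hpos.ne'
  have hnode : ∀ i, volume.real E * (1 + node d i) / 2 ∈ Set.Icc 0 (volume.real E) := fun i => by
    have := node_mem_Icc (n := d) (i := i)
    constructor <;> nlinarith [this.1, this.2]
  choose v hvE hv using fun i => exists_mem_volume_real_inter_Iic_eq hE hne (hnode i)
  have hlip := lipschitzWith_volume_real_inter_Iic hE.measure_ne_top
  refine abs_eval_le_mul_eval_T_of_node_separated hf (half_pos hpos) (fun i _ => hfE _ (hvE i))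
    (fun i _ j _ => ?_) fun i _ => ?_
  · calc volume.real E / 2 * |node d i - node d j|
        = |volume.real E * (1 + node d i) / 2 - volume.real E * (1 + node d j) / 2| := by
          rw [← sub_div, ← mul_sub, add_sub_add_left_eq_sub, mul_div_right_comm, abs_mul,
            abs_of_pos (half_pos hpos)]
      _ ≤ |v i - v j| := by simpa [Real.dist_eq, hv] using hlip.dist_le_mul (v i) (v j)
  · have hia : volume.real E * (1 + node d i) / 2 ≤ v i - a := by
      have := hlip.dist_le_mul (v i) a
      rw [hv, measureReal_inter_Iic_of_mem_lowerBounds fun t ht => (hEab ht).1, Real.dist_eq,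
        Real.dist_eq, sub_zero, abs_of_nonneg (hnode i).1,
        abs_of_nonneg (sub_nonneg.mpr (hEab (hvE i)).1)] at this
      simpa using this
    rw [abs_of_nonneg (sub_nonneg.mpr (hEab (hvE i)).2)]
    linarith

theorem abs_eval_left_le_mul_eval_T (hf : f.natDegree ≤ d) (hE : IsCompact E)
    (hEab : E ⊆ Set.Icc a b) (hfE : ∀ t ∈ E, |f.eval t| ≤ ε) (hpos : 0 < volume.real E)
    (hz : 2 * (b - a) ≤ (z + 1) * volume.real E) :
    |f.eval a| ≤ ε * (T ℝ d).eval z := by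
  have hvol : volume.real (-E) = volume.real E := by simp [measureReal_def]
  have hsub : -E ⊆ Set.Icc (-b) (-a) := by simpa using Set.neg_subset_neg.mpr hEab
  have hdeg : (f.comp (-X)).natDegree ≤ d := by simpa [natDegree_comp] using hf
  have hfneg : ∀ t ∈ -E, |(f.comp (-X)).eval t| ≤ ε := fun t ht => by simpa using hfE (-t) ht
  have hzneg : 2 * (-a - -b) ≤ (z + 1) * volume.real (-E) := by
    rw [hvol]
    linarith
  simpa using abs_eval_right_le_mul_eval_T hdeg hE.neg hsub hfneg (hvol ▸ hpos) hzneg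

theorem abs_eval_le_mul_eval_T_of_isCompact (hf : f.natDegree ≤ d) (hE : IsCompact E)
    (hEab : E ⊆ Set.Icc a b) (hfE : ∀ t ∈ E, |f.eval t| ≤ ε) (hpos : 0 < volume.real E)
    (hz : 2 * (b - a) ≤ (z + 1) * volume.real E) (hx : x ∈ Set.Icc a b) :
    |f.eval x| ≤ ε * (T ℝ d).eval z := by
  have hleft (h : 0 < volume.real (E ∩ Set.Iic x)) :
      2 * (x - a) ≤ (z + 1) * volume.real (E ∩ Set.Iic x) → |f.eval x| ≤ ε * (T ℝ d).eval z :=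
    abs_eval_right_le_mul_eval_T hf (hE.inter_right isClosed_Iic)
      (fun t ht => ⟨(hEab ht.1).1, ht.2⟩) (fun t ht => hfE t ht.1) h
  have hright (h : 0 < volume.real (E ∩ Set.Ici x)) :
      2 * (b - x) ≤ (z + 1) * volume.real (E ∩ Set.Ici x) → |f.eval x| ≤ ε * (T ℝ d).eval z :=
    abs_eval_left_le_mul_eval_T hf (hE.inter_right isClosed_Ici)
      (fun t ht => ⟨ht.2, (hEab ht.1).2⟩) (fun t ht => hfE t ht.1) h
  rw [← measureReal_inter_Iic_add_inter_Ici x hE.measure_ne_top] at hpos hz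
  rcases (measureReal_nonneg (μ := volume) (s := E ∩ Set.Iic x)).eq_or_lt' with h₁ | h₁
  · rw [h₁, zero_add] at hpos hz
    exact hright hpos (by linarith [hx.1])
  rcases (measureReal_nonneg (μ := volume) (s := E ∩ Set.Ici x)).eq_or_lt' with h₂ | h₂
  · rw [h₂, add_zero] at hz
    exact hleft h₁ (by linarith [hx.2])
  rcases le_or_gt (2 * (x - a)) ((z + 1) * volume.real (E ∩ Set.Iic x)) with h | h
  · exact hleft h₁ h
  · exact hright h₂ (by linarith)

theorem remez_inequality (hf : f.natDegree ≤ d) (hEab : E ⊆ Set.Icc a b)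
    (hfE : ∀ t ∈ E, |f.eval t| ≤ ε) (hpos : 0 < volume.real E) (hx : x ∈ Set.Icc a b) :
    |f.eval x| ≤ ε * (T ℝ d).eval (2 * (b - a) / volume.real E - 1) := by
  have hcl : closure E ⊆ Set.Icc a b := closure_minimal hEab isClosed_Icc
  have hK : IsCompact (closure E) := isCompact_Icc.of_isClosed_subset isClosed_closure hcl
  have hle : volume.real E ≤ volume.real (closure E) :=
    measureReal_mono subset_closure hK.measure_ne_top
  have hfK : closure E ⊆ {t | |f.eval t| ≤ ε} :=
    closure_minimal hfE (isClosed_le f.continuous.abs continuous_const)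
  have hab : 0 ≤ b - a := sub_nonneg.mpr (hx.1.trans hx.2)
  refine abs_eval_le_mul_eval_T_of_isCompact hf hK hcl hfK (hpos.trans_le hle) ?_ hx
  calc 2 * (b - a) = 2 * (b - a) / volume.real E * volume.real E := by field_simp
    _ ≤ (2 * (b - a) / volume.real E - 1 + 1) * volume.real (closure E) := by
      rw [sub_add_cancel]
      gcongr

theorem abs_eval_le_mul_div_pow (hf : f.natDegree ≤ d) (hEab : E ⊆ Set.Icc a b)
    (hfE : ∀ t ∈ E, |f.eval t| ≤ ε) (hpos : 0 < volume.real E) (hx : x ∈ Set.Icc a b) :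
    |f.eval x| ≤ ε * (4 * (b - a) / volume.real E) ^ d := by
  obtain ⟨t, ht⟩ : E.Nonempty := nonempty_of_measureReal_ne_zero hpos.ne'
  have hε : 0 ≤ ε := (abs_nonneg _).trans (hfE t ht)
  have hE : volume.real E ≤ b - a := by
    rw [← Real.volume_real_Icc_of_le (hx.1.trans hx.2)]
    exact measureReal_mono hEab (by simp)
  have hz : 1 ≤ 2 * (b - a) / volume.real E - 1 := by
    rw [le_sub_iff_add_le, le_div_iff₀ hpos]
    linarith
  refine (remez_inequality hf hEab hfE hpos hx).trans ?_
  gcongr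
  refine (eval_T_le_two_mul_pow d hz).trans ?_
  gcongr
  linarith [show 4 * (b - a) / volume.real E = 2 * (2 * (b - a) / volume.real E) by ring]

end Remez

theorem le_mul_rpow_of_le_mul_div_pow {d : ℕ} (hd : d ≠ 0) {S ε M C : ℝ} (hS : 0 < S) (hε : 0 ≤ ε)
    (hM : 0 < M) (hC : 0 ≤ C) (h : S ≤ ε * (C / M) ^ d) : M ≤ C * (ε / S) ^ (1 / (d : ℝ)) := by
  have hpow : M ^ d ≤ C ^ d * (ε / S) := by
    rw [div_pow, ← mul_div_assoc, le_div_iff₀ (pow_pos hM d)] at h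
    rw [← mul_div_assoc, le_div_iff₀ hS]
    linarith
  calc M = (M ^ d) ^ (d⁻¹ : ℝ) := (Real.pow_rpow_inv_natCast hM.le hd).symm
    _ ≤ (C ^ d * (ε / S)) ^ (d⁻¹ : ℝ) := by gcongr
    _ = C * (ε / S) ^ (1 / (d : ℝ)) := by
      rw [Real.mul_rpow (by positivity) (by positivity), Real.pow_rpow_inv_natCast hC hd, one_div]

theorem sublevel_estimate_polynomial_general {d : ℕ} (hd : 1 ≤ d) {f : ℝ[X]}
    (hdeg : f.natDegree ≤ d) {a b S : ℝ}
    (hS : S = sSup ((fun t => |f.eval t|) '' Set.Icc a b)) (hSpos : 0 < S) {ε : ℝ} (hε : 0 ≤ ε) :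
    volume {t ∈ Set.Icc a b | |f.eval t| ≤ ε} ≤
      ENNReal.ofReal (4 * (b - a) * (ε / S) ^ (1 / (d : ℝ))) := by
  have hne : (Set.Icc a b).Nonempty := by
    by_contra h
    simp [hS, Set.not_nonempty_iff_eq_empty.mp h] at hSpos
  obtain ⟨x, hx, hxS⟩ : S ∈ (fun t => |f.eval t|) '' Set.Icc a b :=
    hS ▸ (isCompact_Icc.image f.continuous.abs).sSup_mem (hne.image _)
  set E := {t ∈ Set.Icc a b | |f.eval t| ≤ ε}
  have hfin : volume E ≠ ⊤ := measure_ne_top_of_subset (Set.sep_subset _ _) (by simp)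
  rw [← ENNReal.ofReal_toReal hfin]
  refine ENNReal.ofReal_le_ofReal ?_
  have hab : 0 ≤ b - a := sub_nonneg.mpr (hx.1.trans hx.2)
  rcases (measureReal_nonneg (μ := volume) (s := E)).eq_or_lt' with h | hpos
  · rw [← measureReal_def, h]
    positivity
  refine le_mul_rpow_of_le_mul_div_pow (Nat.one_le_iff_ne_zero.mp hd) hSpos hε hpos
    (by positivity) ?_
  exact hxS ▸ abs_eval_le_mul_div_pow hdeg (Set.sep_subset _ _) (fun t ht => ht.2) hpos hx

/-- One-dimensional sub-level ((C,α)-good) estimate from Remez' inequality: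
for a polynomial of degree ≤ d with sup-norm `S > 0` on `[0,1]`,
the set where `|f| < ε` has measure at most `4(ε/S)^{1/d}`. -/
theorem sublevel_estimate_polynomial (d : ℕ) (hd : 1 ≤ d)
    (f : Polynomial ℝ) (hdeg : f.natDegree ≤ d)
    (S : ℝ) (hS : S = sSup ((fun t => |f.eval t|) '' Set.Icc (0 : ℝ) 1)) (hSpos : 0 < S)
    (ε : ℝ) (hε : 0 < ε) :
    volume {t ∈ Set.Icc (0 : ℝ) 1 | |f.eval t| < ε} ≤
      ENNReal.ofReal (4 * (ε / S) ^ (1 / (d : ℝ))) := by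
  have hsub : {t ∈ Set.Icc (0 : ℝ) 1 | |f.eval t| < ε} ⊆ {t ∈ Set.Icc 0 1 | |f.eval t| ≤ ε} :=
    fun t ht => ⟨ht.1, ht.2.le⟩
  simpa using (measure_mono hsub).trans <|
    sublevel_estimate_polynomial_general hd hdeg hS hSpos hε.le
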